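/- Let R be a commutative Noetherian ring, S a Serre subcategory of the category of R-modules, 𝔟 ⊆ 𝔞 ideals of R, M an R-module, and s ≥ 0 an integer. If Ext^{j}_R(R/𝔞, H^{i}_𝔟(M)) belongs to S for all integers i, j ≥ 0 with i + j ≤ s, then Ext^{n}_R(R/𝔞, M) belongs to S for all integers 0 ≤ n ≤ s. -/

import Mathlib

open CategoryTheory

universe u

/-- The `R`-module `Ext^i_R(N, M)` for two `R`-modules (objects of `ModuleCat R`). -/
noncomputable def extObj {R : Type u} [CommRing R] (N M : ModuleCat.{u} R) (i : ℕ) :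
    ModuleCat.{u} R :=
  ((Ext R (ModuleCat.{u} R) i).obj (Opposite.op N)).obj M

/-- The `R`-module `Ext^i_R(R/𝔞, M)`. -/
noncomputable def extIdeal {R : Type u} [CommRing R] (𝔞 : Ideal R) (i : ℕ)
    (M : ModuleCat.{u} R) : ModuleCat.{u} R :=
  extObj (ModuleCat.of R (R ⧸ 𝔞)) M i

/-- A Serre subcategory of the category of `R`-modules: a class of `R`-modules such that
for every short exact sequence `0 → L → M → N → 0`, `M` belongs to the class if and only if
both `L` and `N` belong to it. -/
structure SerreClass (R : Type u) [CommRing R] : Type (u + 1) where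
  mem : ∀ (M : Type u) [AddCommGroup M] [Module R M], Prop
  mem_iff_of_ses :
    ∀ {L M N : Type u} [AddCommGroup L] [Module R L] [AddCommGroup M] [Module R M]
      [AddCommGroup N] [Module R N] (f : L →ₗ[R] M) (g : M →ₗ[R] N),
      Function.Injective f → Function.Surjective g → LinearMap.range f = LinearMap.ker g →
      (mem M ↔ (mem L ∧ mem N))

/-!
Write `Γ` for the `𝔟`-torsion functor. By Artin–Rees, `Γ` preserves injective modules, so a torsion
module embeds in a torsion injective one and hence has no higher local cohomology; thus
`M` and `M ⧸ ΓM` have the same local cohomology in positive degrees. The torsion-free module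
`M ⧸ ΓM` in turn embeds in a torsion-free injective module `E`, all of whose local cohomology
vanishes, so the cokernel `N` satisfies `H^i(N) ≅ H^{i+1}(M)`. Since `Ext^{n+1}(R/𝔞, M ⧸ ΓM)` is a
quotient of `Ext^n(R/𝔞, N)` and `ΓM = H^0(M)`, the claim follows by induction on `n`, starting from
`Hom(R/𝔞, M ⧸ ΓM) = 0`.
-/

open Limits Opposite

section Comparison

universe v

section

variable {R : Type*} [Ring R] {S S' : ShortComplex (ModuleCat.{v} R)} {H H' : Type v}
  [AddCommGroup H] [Module R H] [AddCommGroup H'] [Module R H']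

/-- The left homology data of a short complex of modules whose homology is presented as the target
of a surjective map from the cycles with kernel the boundaries. -/
noncomputable def leftHomologyDataOfSurjective (π : LinearMap.ker S.g.hom →ₗ[R] H)
    (hπ : Function.Surjective π)
    (hker : LinearMap.ker π = LinearMap.range S.moduleCatToCycles) : S.LeftHomologyData :=
  have wπ : ModuleCat.ofHom S.moduleCatToCycles ≫ ModuleCat.ofHom π = 0 :=
    ModuleCat.hom_ext (LinearMap.range_le_ker_iff.1 hker.ge)
  have exact : (ShortComplex.mk _ _ wπ).Exact :=
    (ShortComplex.moduleCat_exact_iff_range_eq_ker _).2 hker.symm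
  have : Epi (ShortComplex.mk _ _ wπ).g := (ModuleCat.epi_iff_surjective _).2 hπ
  { K := ModuleCat.of R (LinearMap.ker S.g.hom)
    H := ModuleCat.of R H
    i := ModuleCat.ofHom (LinearMap.ker S.g.hom).subtype
    π := ModuleCat.ofHom π
    wi := S.moduleCatLeftHomologyData.wi
    hi := ModuleCat.kernelIsLimit _
    wπ := wπ
    hπ := exact.gIsCokernel }

lemma leftHomologyDataOfSurjective_homologyIso_commSq
    {π : LinearMap.ker S.g.hom →ₗ[R] H} {hπ : Function.Surjective π}
    {hker : LinearMap.ker π = LinearMap.range S.moduleCatToCycles}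
    {π' : LinearMap.ker S'.g.hom →ₗ[R] H'} {hπ' : Function.Surjective π'}
    {hker' : LinearMap.ker π' = LinearMap.range S'.moduleCatToCycles} (φ : S ⟶ S')
    (α : H →ₗ[R] H')
    (hα : ∀ (z : LinearMap.ker S.g.hom) (z' : LinearMap.ker S'.g.hom),
      z'.1 = φ.τ₂ z.1 → α (π z) = π' z') :
    CommSq (leftHomologyDataOfSurjective π hπ hker).homologyIso.hom
      (ShortComplex.homologyMap φ) (ModuleCat.ofHom α)
      (leftHomologyDataOfSurjective π' hπ' hker').homologyIso.hom where
  w := by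
    let h := leftHomologyDataOfSurjective π hπ hker
    let h' := leftHomologyDataOfSurjective π' hπ' hker'
    let γ : ShortComplex.LeftHomologyMapData φ h h' :=
      { φK := ShortComplex.cyclesMap' φ h h'
        φH := ModuleCat.ofHom α
        commf' := ShortComplex.f'_cyclesMap' φ h h'
        commi := ShortComplex.cyclesMap'_i φ h h'
        commπ := by
          ext z
          exact hα z _ congr($(ShortComplex.cyclesMap'_i φ h h') z) }
    exact γ.homologyMap_comm.symm

end

variable {R : Type*} [CommRing R] {C : Type*} [Category.{v} C] [Abelian C] [Linear R C]

section

variable [HasExt.{v} C] {X : C} (P : ProjectiveResolution X) (Y : C)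

lemma smul_extMk (r : R) {Y : C} {n : ℕ} (f : P.complex.X n ⟶ Y) (m : ℕ) (hm : n + 1 = m)
    (hf : P.complex.d m n ≫ f = 0) :
    r • P.extMk f m hm hf = P.extMk (r • f) m hm (by simp [hf]) := by
  simp [Abelian.Ext.smul_eq_comp_mk₀, P.extMk_comp_mk₀]

lemma extMk_zero_eq_zero_iff {Y : C} (f : P.complex.X 0 ⟶ Y) (m : ℕ) (hm : 0 + 1 = m)
    (hf : P.complex.d m 0 ≫ f = 0) : P.extMk f m hm hf = 0 ↔ f = 0 := by
  refine ⟨fun h ↦ ?_, ?_⟩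
  · rw [← P.extEquivCohomologyClass.apply_eq_iff_eq, P.extEquivCohomologyClass_extMk,
      P.extEquivCohomologyClass_zero, CochainComplex.HomComplex.CohomologyClass.mk_eq_zero_iff,
      CochainComplex.HomComplex.Cocycle.toSingleMk_mem_coboundaries_iff _ _ _ _ _ 1 (by lia)] at h
    obtain ⟨g, hg⟩ := h
    rw [(P.cochainComplex.isZero_of_isStrictlyLE 0 1 (by lia)).eq_zero_of_src g, comp_zero] at hg
    rwa [eq_comm, Preadditive.IsIso.comp_left_eq_zero] at hg
  · rintro rfl
    exact P.extMk_zero m hm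

variable (R)

/-- The linear map sending a cocycle of `Hom(P, Y)` to its class in `Ext X Y n`. -/
noncomputable def extMkLinearMap (n : ℕ) :
    LinearMap.ker ((P.complex.linearYonedaObj R Y).sc n).g.hom →ₗ[R] Abelian.Ext X Y n where
  toFun f := P.extMk f.1 _ (CochainComplex.next ℕ n).symm f.2
  map_add' _ _ := (P.add_extMk _ _ _ _ _ _).symm
  map_smul' _ _ := (smul_extMk P _ _ _ _ _).symm

lemma extMkLinearMap_surjective (n : ℕ) : Function.Surjective (extMkLinearMap R P Y n) := by
  intro α
  obtain ⟨f, hf, rfl⟩ := P.extMk_surjective α _ (CochainComplex.next ℕ n).symm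
  exact ⟨⟨f, hf⟩, rfl⟩

lemma ker_extMkLinearMap (n : ℕ) :
    LinearMap.ker (extMkLinearMap R P Y n) =
      LinearMap.range ((P.complex.linearYonedaObj R Y).sc n).moduleCatToCycles := by
  ext f
  suffices extMkLinearMap R P Y n f = 0 ↔
      ∃ g : P.complex.X ((ComplexShape.up ℕ).prev n) ⟶ Y, P.complex.d n _ ≫ g = f.1 from
    this.trans (exists_congr fun _ ↦ ⟨fun h ↦ Subtype.ext h, congrArg Subtype.val⟩)
  cases n with
  | zero =>
    rw [CochainComplex.prev_nat_zero]
    refine (extMk_zero_eq_zero_iff P f.1 _ (CochainComplex.next ℕ 0).symm f.2).trans ?_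
    simpa using eq_comm
  | succ n =>
    rw [CochainComplex.prev_nat_succ]
    exact P.extMk_eq_zero_iff f.1 _ (CochainComplex.next ℕ (n + 1)).symm f.2 n rfl

/-- `Ext X Y n` is the cohomology of `Hom(P, Y)` in degree `n`. -/
noncomputable def homologyLinearYonedaObjIso (n : ℕ) :
    (P.complex.linearYonedaObj R Y).homology n ≅ ModuleCat.of R (Abelian.Ext X Y n) :=
  (leftHomologyDataOfSurjective _ (extMkLinearMap_surjective R P Y n)
    (ker_extMkLinearMap R P Y n)).homologyIso

variable {P} {X' : C} {P' : ProjectiveResolution X'} {g : X' ⟶ X}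
  (φ : ProjectiveResolution.Hom P' P g)

/-- The morphism `Hom(P, Y) ⟶ Hom(P', Y)` induced by a morphism of resolutions `P' ⟶ P`. -/
noncomputable def linearYonedaObjMap :
    P.complex.linearYonedaObj R Y ⟶ P'.complex.linearYonedaObj R Y :=
  (HomologicalComplex.unopFunctor _ _).map
    ((((linearYoneda R C).obj Y).rightOp.mapHomologicalComplex _).map φ.hom).op

lemma homologyLinearYonedaObjIso_commSq (n : ℕ) :
    CommSq (homologyLinearYonedaObjIso R P Y n).hom
      (HomologicalComplex.homologyMap (linearYonedaObjMap R Y φ) n)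
      (ModuleCat.ofHom ((Abelian.Ext.mk₀ g).precompOfLinear R Y (zero_add n)))
      (homologyLinearYonedaObjIso R P' Y n).hom := by
  refine leftHomologyDataOfSurjective_homologyIso_commSq
    ((HomologicalComplex.shortComplexFunctor _ _ n).map (linearYonedaObjMap R Y φ)) _ ?_
  rintro f ⟨_, _⟩ rfl
  exact P.mk₀_comp_extMk f.1 _ (CochainComplex.next ℕ n).symm f.2 φ

end

section

variable [EnoughProjectives C] {X X' : C} {P : ProjectiveResolution X}
  {P' : ProjectiveResolution X'} {g : X' ⟶ X} (φ : ProjectiveResolution.Hom P' P g) (Y : C)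

variable (R) in
lemma isoExt_hom_commSq (n : ℕ) :
    CommSq (P.isoExt n Y).hom (((Ext R C n).map g.op).app Y)
      (HomologicalComplex.homologyMap (linearYonedaObjMap R Y φ) n) (P'.isoExt n Y).hom := by
  let F := ((linearYoneda R C).obj Y).rightOp
  let Φ := (F.mapHomologicalComplex _).map φ.hom
  have leftDerived : CommSq (P.isoLeftDerivedObj F n).inv.unop ((F.leftDerived n).map g).unop
      (HomologicalComplex.homologyMap Φ n).unop (P'.isoLeftDerivedObj F n).inv.unop :=
    ⟨congrArg Quiver.Hom.unop (P'.isoLeftDerivedObj_inv_naturality g P φ.hom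
      (by simpa using φ.hom_f_zero_comp_π_f_zero) F n).symm⟩
  have unop : CommSq (((F.mapHomologicalComplex _).obj P.complex).homologyUnop n).hom
      (HomologicalComplex.homologyMap (linearYonedaObjMap R Y φ) n)
      (HomologicalComplex.homologyMap Φ n).unop
      (((F.mapHomologicalComplex _).obj P'.complex).homologyUnop n).hom :=
    ⟨congrArg Quiver.Hom.unop
      (HomologicalComplex.homologyOp_hom_naturality (linearYonedaObjMap R Y φ) n)⟩
  exact leftDerived.horiz_comp unop.horiz_inv

end

variable [HasExt.{v} C]

variable (R) in
/-- The contravariant functor `X ↦ Ext X Y n` to `R`-modules, for the `Ext` of the derived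
category. -/
@[simps]
noncomputable def linearExt (Y : C) (n : ℕ) : Cᵒᵖ ⥤ ModuleCat.{v} R where
  obj X := ModuleCat.of R (Abelian.Ext X.unop Y n)
  map g := ModuleCat.ofHom ((Abelian.Ext.mk₀ g.unop).precompOfLinear R Y (zero_add n))
  map_id X := by
    ext x
    exact x.mk₀_id_comp
  map_comp f g := by
    ext x
    exact (Abelian.Ext.mk₀_comp_mk₀_assoc _ _ x).symm

variable (R) in
/-- The `Ext` functors defined by deriving `Hom(-, Y)` agree with those of the derived category. -/
noncomputable def extFlipObjIsoLinearExt [EnoughProjectives C] (Y : C) (n : ℕ) :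
    (Ext R C n).flip.obj Y ≅ linearExt R Y n :=
  NatIso.ofComponents (fun X ↦ (projectiveResolution X.unop).isoExt n Y ≪≫
      homologyLinearYonedaObjIso R (projectiveResolution X.unop) Y n) fun g ↦ by
    let φ : ProjectiveResolution.Hom (projectiveResolution _) (projectiveResolution _) g.unop :=
      { hom := ProjectiveResolution.lift g.unop _ _
        hom_f_zero_comp_π_f_zero := by
          simpa using ProjectiveResolution.lift_commutes_zero _ _ _ }
    exact ((isoExt_hom_commSq R φ Y n).horiz_comp
      (homologyLinearYonedaObjIso_commSq R Y φ n)).w.symm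

end Comparison

section ColimitExt

universe v

lemma exact_of_forall_evaluation {J D : Type*} [Category* J] [Category* D] [Abelian D]
    {S : ShortComplex (J ⥤ D)} (hS : ∀ j, (S.map ((evaluation J D).obj j)).Exact) : S.Exact := by
  rw [S.exact_iff_isZero_homology, Functor.isZero_iff]
  exact fun j ↦ ((ShortComplex.exact_iff_isZero_homology _).1 (hS j)).of_iso
    (S.mapHomologyIso ((evaluation J D).obj j)).symm

variable {R : Type*} [CommRing R] {C : Type*} [Category.{v} C] [Abelian C] [Linear R C]
  [HasExt.{v} C]

variable (R) in
/-- The natural transformation `Ext (-) Y n ⟶ Ext (-) Z m` given by the Yoneda product with a class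
in `Ext Y Z k`. -/
@[simps]
noncomputable def linearExtMap {Y Z : C} {k : ℕ} (β : Abelian.Ext Y Z k) {n m : ℕ}
    (h : n + k = m) : linearExt R Y n ⟶ linearExt R Z m where
  app X := ModuleCat.ofHom (β.postcompOfLinear R X.unop h)
  naturality _ _ _ := by
    ext x
    exact Abelian.Ext.comp_assoc _ _ _ (zero_add n) h (by lia)

variable {J : Type*} [Category* J] [HasColimitsOfShape J (ModuleCat.{v} R)] (F : J ⥤ Cᵒᵖ)

variable (R) in
/-- The colimit of `Ext (F j) Y n` over `j`, of which local cohomology is the instance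
`F j = R ⧸ I ^ j`. -/
noncomputable abbrev colimitExt (Y : C) (n : ℕ) : ModuleCat.{v} R :=
  colimit (F ⋙ linearExt R Y n)

variable (R) in
/-- The map on colimits of `Ext` given by the Yoneda product with a class in `Ext Y Z k`. -/
noncomputable def colimitExtMap {Y Z : C} {k : ℕ} (β : Abelian.Ext Y Z k) {n m : ℕ}
    (h : n + k = m) : colimitExt R F Y n ⟶ colimitExt R F Z m :=
  colimMap (Functor.whiskerLeft F (linearExtMap R β h))

lemma linearExtMap_comp_eq_zero {X Y Z : C} {a b : ℕ} {β : Abelian.Ext X Y a}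
    {γ : Abelian.Ext Y Z b} (w : β.comp γ rfl = 0) {l m n : ℕ} (h : l + a = m) (h' : m + b = n) :
    linearExtMap R β h ≫ linearExtMap R γ h' = 0 := by
  ext _ x
  refine (Abelian.Ext.comp_assoc x β γ h rfl (by lia)).trans ?_
  rw [w]
  exact Abelian.Ext.comp_zero ..

lemma colimitExtMap_comp_eq_zero {X Y Z : C} {a b : ℕ} {β : Abelian.Ext X Y a}
    {γ : Abelian.Ext Y Z b} (w : β.comp γ rfl = 0) {l m n : ℕ} (h : l + a = m) (h' : m + b = n) :
    colimitExtMap R F β h ≫ colimitExtMap R F γ h' = 0 := by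
  refine (colim.map_comp _ _).symm.trans ?_
  rw [← Functor.whiskerLeft_comp, linearExtMap_comp_eq_zero w]
  exact colim.map_zero _ _

variable (R) in
lemma isZero_colimitExt_of_injective (E : C) [Injective E] (n : ℕ) :
    IsZero (colimitExt R F E (n + 1)) := by
  refine (IsZero.iff_id_eq_zero _).2 (colimit.hom_ext fun j ↦ ?_)
  ext x
  obtain rfl : x = 0 := Abelian.Ext.eq_zero_of_injective x
  simp only [map_zero]

variable [HasExactColimitsOfShape J (ModuleCat.{v} R)]

lemma exact_colimitExtMap {X Y Z : C} {a b : ℕ} {β : Abelian.Ext X Y a} {γ : Abelian.Ext Y Z b}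
    (w : β.comp γ rfl = 0) {l m n : ℕ} (h : l + a = m) (h' : m + b = n)
    (exact : ∀ (W : C) (y : Abelian.Ext W Y m), y.comp γ h' = 0 →
      ∃ x : Abelian.Ext W X l, x.comp β h = y) :
    (ShortComplex.mk _ _ (colimitExtMap_comp_eq_zero (R := R) F w h h')).Exact := by
  let S : ShortComplex (J ⥤ ModuleCat.{v} R) :=
    ShortComplex.mk (Functor.whiskerLeft F (linearExtMap R β h))
      (Functor.whiskerLeft F (linearExtMap R γ h')) (by
        rw [← Functor.whiskerLeft_comp, linearExtMap_comp_eq_zero w]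
        rfl)
  have hS : S.Exact := exact_of_forall_evaluation fun j ↦
    (ShortComplex.moduleCat_exact_iff _).2 fun y hy ↦ exact _ y hy
  exact hS.map colim

variable {S : ShortComplex C} (hS : S.ShortExact) {n₀ n₁ : ℕ} (h : n₀ + 1 = n₁)

include hS

lemma exact_colimitExtMap_f_g (n : ℕ) :
    (ShortComplex.mk (colimitExtMap R F (.mk₀ S.f) (add_zero n))
      (colimitExtMap R F (.mk₀ S.g) (add_zero n))
      (colimitExtMap_comp_eq_zero F (by simp) _ _)).Exact :=
  exact_colimitExtMap F (by simp) _ _ fun _ ↦ Abelian.Ext.covariant_sequence_exact₂ _ hS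

lemma exact_colimitExtMap_g_extClass :
    (ShortComplex.mk (colimitExtMap R F (.mk₀ S.g) (add_zero n₀))
      (colimitExtMap R F hS.extClass h)
      (colimitExtMap_comp_eq_zero F (by simp) _ _)).Exact :=
  exact_colimitExtMap F (by simp) _ _ fun _ y ↦ Abelian.Ext.covariant_sequence_exact₃ _ hS y h

lemma exact_colimitExtMap_extClass_f :
    (ShortComplex.mk (colimitExtMap R F hS.extClass h)
      (colimitExtMap R F (.mk₀ S.f) (add_zero n₁))
      (colimitExtMap_comp_eq_zero F (by simp) _ _)).Exact :=
  exact_colimitExtMap F (by simp) _ _ fun _ y hy ↦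
    Abelian.Ext.covariant_sequence_exact₁ _ hS y hy h

lemma isIso_colimitExtMap_extClass (h₀ : IsZero (colimitExt R F S.X₂ n₀))
    (h₁ : IsZero (colimitExt R F S.X₂ n₁)) : IsIso (colimitExtMap R F hS.extClass h) := by
  have := (exact_colimitExtMap_g_extClass (R := R) F hS h).mono_g (h₀.eq_zero_of_src _)
  have := (exact_colimitExtMap_extClass_f (R := R) F hS h).epi_f (h₁.eq_zero_of_tgt _)
  exact isIso_of_mono_of_epi _

lemma isIso_colimitExtMap_g (h₀ : IsZero (colimitExt R F S.X₁ n₀))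
    (h₁ : IsZero (colimitExt R F S.X₁ (n₀ + 1))) :
    IsIso (colimitExtMap R F (.mk₀ S.g) (add_zero n₀)) := by
  have := (exact_colimitExtMap_f_g (R := R) F hS n₀).mono_g (h₀.eq_zero_of_src _)
  have := (exact_colimitExtMap_g_extClass (R := R) F hS rfl).epi_f (h₁.eq_zero_of_tgt _)
  exact isIso_of_mono_of_epi _

include h in
lemma isZero_colimitExt_X₁ [Epi (colimitExtMap R F (.mk₀ S.g) (add_zero n₀))]
    (h₁ : IsZero (colimitExt R F S.X₂ n₁)) : IsZero (colimitExt R F S.X₁ n₁) := by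
  have extClass_eq_zero : colimitExtMap R F hS.extClass h = 0 :=
    (cancel_epi (colimitExtMap R F (.mk₀ S.g) (add_zero n₀))).1
      ((colimitExtMap_comp_eq_zero F (by simp) _ _).trans comp_zero.symm)
  have := (exact_colimitExtMap_extClass_f (R := R) F hS h).mono_g extClass_eq_zero
  exact h₁.of_mono (colimitExtMap R F (.mk₀ S.f) (add_zero n₁))

end ColimitExt

section Torsion

variable {R : Type*} [CommRing R] {I : Ideal R} {M N : Type*} [AddCommGroup M] [Module R M]
  [AddCommGroup N] [Module R N]

lemma mem_primaryComponent_iff {x : M} :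
    x ∈ I.primaryComponent M ↔ ∃ n : ℕ, ∀ a ∈ I ^ n, a • x = 0 := by
  simp [Ideal.primaryComponent_mem]

lemma exists_forall_smul_eq_zero_of_fg {P : Submodule R M} (hP : P.FG)
    (h : P ≤ I.primaryComponent M) : ∃ n : ℕ, ∀ a ∈ I ^ n, ∀ x ∈ P, a • x = 0 := by
  have directed : DirectedOn (· ≤ ·)
      (Set.range fun n : ℕ ↦ Submodule.torsionBySet R M (I ^ n : Ideal R)) :=
    directedOn_range.2 (monotone_nat_of_le_succ fun n ↦
      Submodule.torsionBySet_le_torsionBySet_pow n (n + 1) n.le_succ I).directed_le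
  obtain ⟨_, ⟨n, rfl⟩, hn⟩ := (CompleteLattice.isCompactElement_iff_le_of_directed_sSup_le _ _).1
    ((Submodule.fg_iff_compact P).1 hP) _ (Set.range_nonempty _) directed h
  exact ⟨n, fun a ha x hx ↦ (Submodule.mem_torsionBySet_iff _ _).1 (hn hx) ⟨a, ha⟩⟩

variable (I M) in
lemma primaryComponent_primaryComponent :
    I.primaryComponent (I.primaryComponent M) = ⊤ := by
  refine eq_top_iff.2 fun ⟨x, hx⟩ _ ↦ ?_
  obtain ⟨n, hn⟩ := mem_primaryComponent_iff.1 hx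
  exact mem_primaryComponent_iff.2 ⟨n, fun a ha ↦ Subtype.ext (hn a ha)⟩

lemma map_primaryComponent_le (f : M →ₗ[R] N) :
    (I.primaryComponent M).map f ≤ I.primaryComponent N :=
  Submodule.map_le_iff_le_comap.2 fun x hx ↦ I.primaryComponent_map_mem f ⟨x, hx⟩

lemma comap_primaryComponent_of_injective {f : M →ₗ[R] N} (hf : Function.Injective f) :
    (I.primaryComponent N).comap f = I.primaryComponent M := by
  ext x
  simp only [Submodule.mem_comap, mem_primaryComponent_iff, ← map_smul, map_eq_zero_iff f hf]

lemma primaryComponent_eq_top_of_surjective {f : M →ₗ[R] N} (hf : Function.Surjective f)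
    (h : I.primaryComponent M = ⊤) : I.primaryComponent N = ⊤ := by
  rw [eq_top_iff, ← LinearMap.range_eq_top.2 hf, ← Submodule.map_top, ← h]
  exact map_primaryComponent_le f

variable [IsNoetherianRing R]

variable (I M) in
lemma primaryComponent_quotient_primaryComponent :
    I.primaryComponent (M ⧸ I.primaryComponent M) = ⊥ := by
  refine (Submodule.eq_bot_iff _).2 fun y hy ↦ ?_
  obtain ⟨x, rfl⟩ := Submodule.mkQ_surjective _ y
  obtain ⟨n, hn⟩ := mem_primaryComponent_iff.1 hy
  have pow_smul_le :
      Submodule.map (LinearMap.toSpanSingleton R M x) (I ^ n) ≤ I.primaryComponent M := by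
    rintro _ ⟨a, ha, rfl⟩
    exact (Submodule.Quotient.mk_eq_zero _).1 (hn a ha)
  obtain ⟨m, hm⟩ := exists_forall_smul_eq_zero_of_fg
    ((IsNoetherian.noetherian (I ^ n)).map _) pow_smul_le
  have pow_le_torsionOf : I ^ (m + n) ≤ Ideal.torsionOf R M x := by
    rw [pow_add, Ideal.mul_le]
    intro b hb c hc
    rw [Ideal.mem_torsionOf_iff, mul_smul]
    exact hm b hb _ ⟨c, hc, rfl⟩
  exact (Submodule.Quotient.mk_eq_zero _).2 (mem_primaryComponent_iff.2 ⟨m + n, pow_le_torsionOf⟩)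

lemma exists_comap_pow_smul_top_le_ker (hN : I.primaryComponent N = ⊤) [Module.Finite R M]
    (P : Submodule R M) (g : P →ₗ[R] N) :
    ∃ m : ℕ, (I ^ m • ⊤ : Submodule R M).comap P.subtype ≤ LinearMap.ker g := by
  obtain ⟨n, hn⟩ := exists_forall_smul_eq_zero_of_fg
    (LinearMap.range_eq_map g ▸ (Module.Finite.fg_top (M := P)).map g) (le_top.trans hN.ge)
  obtain ⟨k, hk⟩ := I.exists_pow_inf_eq_pow_smul P
  have pow_smul_inf_le : I ^ (k + n) • ⊤ ⊓ P ≤ (I ^ n • ⊤ : Submodule R P).map P.subtype := by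
    rw [hk (k + n) (Nat.le_add_right k n), Nat.add_sub_cancel_left, Submodule.map_smul'',
      Submodule.map_top, P.range_subtype]
    exact Submodule.smul_mono le_rfl inf_le_right
  have pow_smul_top_le_ker : I ^ n • ⊤ ≤ LinearMap.ker g :=
    Submodule.smul_le.2 fun a ha x _ ↦ by
      rw [LinearMap.mem_ker, map_smul, hn a ha _ ⟨x, rfl⟩]
  refine ⟨k + n, fun x hx ↦ ?_⟩
  obtain ⟨y, hy, hyx⟩ := pow_smul_inf_le ⟨hx, x.2⟩
  exact pow_smul_top_le_ker (Subtype.ext hyx ▸ hy)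

end Torsion

section Injective

lemma injective_X₃_of_shortExact {C : Type*} [Category* C] [Preadditive C] [Balanced C]
    {S : ShortComplex C} (hS : S.ShortExact) [Injective S.X₁] [Injective S.X₂] :
    Injective S.X₃ :=
  have retract : Retract S.X₃ S.X₂ :=
    { i := hS.splittingOfInjective.s
      r := S.g
      retract := hS.splittingOfInjective.s_g }
  retract.injective

variable {R : Type u} [CommRing R]

lemma shortExact_subtype_mkQ {M : ModuleCat.{u} R} (P : Submodule R M) :
    (ModuleCat.shortComplexOfCompEqZero P.subtype P.mkQ
      (by ext; simp)).ShortExact :=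
  ModuleCat.shortComplex_shortExact _ (LinearMap.exact_subtype_mkQ P) P.injective_subtype
    P.mkQ_surjective

variable [IsNoetherianRing R] (I : Ideal R)

instance moduleInjective_primaryComponent (E : Type u) [AddCommGroup E] [Module R E]
    [Module.Injective R E] : Module.Injective R (I.primaryComponent E) := by
  refine Module.Baer.injective fun J g ↦ ?_
  obtain ⟨m, hm⟩ := exists_comap_pow_smul_top_le_ker (primaryComponent_primaryComponent I E) J g
  obtain ⟨h, hh⟩ := Module.Injective.out (Submodule.mapQ _ (I ^ m • ⊤) J.subtype le_rfl)
    (LinearMap.ker_eq_bot.1 (by rw [Submodule.ker_mapQ, Submodule.mkQ_map_self]))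
    ((I.primaryComponent E).subtype ∘ₗ Submodule.liftQ _ g hm)
  have mem_primaryComponent (r : R) : (h ∘ₗ Submodule.mkQ _) r ∈ I.primaryComponent E := by
    refine mem_primaryComponent_iff.2 ⟨m, fun a ha ↦ ?_⟩
    have smul_mkQ : Submodule.mkQ (I ^ m • ⊤) (a • r) = 0 :=
      (Submodule.Quotient.mk_eq_zero _).2 (Submodule.smul_mem_smul ha Submodule.mem_top)
    rw [LinearMap.comp_apply, ← map_smul, ← map_smul, smul_mkQ, map_zero]
  exact ⟨LinearMap.codRestrict _ _ mem_primaryComponent,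
    fun x hx ↦ Subtype.ext (hh (Submodule.Quotient.mk ⟨x, hx⟩))⟩

variable (E : ModuleCat.{u} R) [Injective E]

instance injective_primaryComponent : Injective (ModuleCat.of R (I.primaryComponent E)) :=
  have := (Module.injective_iff_injective_object R E).2 ‹Injective E›
  Module.injective_object_of_injective_module R _

instance injective_quotient_primaryComponent :
    Injective (ModuleCat.of R (E ⧸ I.primaryComponent E)) :=
  have : Injective (ModuleCat.of R E) := ‹Injective E›
  injective_X₃_of_shortExact (shortExact_subtype_mkQ (I.primaryComponent E))

end Injective

section DegreeZero

variable {R : Type u} [CommRing R]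

/-- Evaluation at `1`, identifying `Ext (R ⧸ I) M 0` with the submodule of elements of `M`
annihilated by `I`. -/
noncomputable def extZeroEval (I : Ideal R) (M : ModuleCat.{u} R) :
    Abelian.Ext (ModuleCat.of R (R ⧸ I)) M 0 →ₗ[R] M :=
  LinearMap.applyₗ (1 : R ⧸ I) ∘ₗ (ModuleCat.homLinearEquiv (S := R)).toLinearMap ∘ₗ
    (Abelian.Ext.linearEquiv₀ (R := R)).toLinearMap

lemma extZeroEval_mk₀ {I : Ideal R} {M : ModuleCat.{u} R} (f : ModuleCat.of R (R ⧸ I) ⟶ M) :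
    extZeroEval I M (.mk₀ f) = f (1 : R ⧸ I) :=
  congr($((Abelian.Ext.linearEquiv₀ (R := R)).apply_symm_apply f) (1 : R ⧸ I))

lemma extZeroEval_injective (I : Ideal R) (M : ModuleCat.{u} R) :
    Function.Injective (extZeroEval I M) := by
  intro x y hxy
  obtain ⟨f, rfl⟩ := (Abelian.Ext.mk₀_bijective _ _).2 x
  obtain ⟨g, rfl⟩ := (Abelian.Ext.mk₀_bijective _ _).2 y
  rw [extZeroEval_mk₀, extZeroEval_mk₀] at hxy
  exact congrArg _ (ModuleCat.hom_ext (Submodule.linearMap_qext _ (LinearMap.ext_ring hxy)))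

lemma range_extZeroEval (I : Ideal R) (M : ModuleCat.{u} R) :
    LinearMap.range (extZeroEval I M) = Submodule.torsionBySet R M I := by
  ext y
  rw [Submodule.mem_torsionBySet_iff]
  constructor
  · rintro ⟨x, rfl⟩ a
    obtain ⟨f, rfl⟩ := (Abelian.Ext.mk₀_bijective _ _).2 x
    have smul_one : (a : R) • (1 : R ⧸ I) = 0 :=
      (Submodule.Quotient.mk_eq_zero I).2 (I.mul_mem_right 1 a.2)
    rw [extZeroEval_mk₀, ← map_smul, smul_one, map_zero]
  · intro hy
    refine ⟨.mk₀ (ModuleCat.ofHom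
      (Submodule.liftQ I (LinearMap.toSpanSingleton R M y) fun a ha ↦ hy ⟨a, ha⟩)), ?_⟩
    rw [extZeroEval_mk₀]
    exact one_smul R y

lemma extZeroEval_comp_mk₀ {I : Ideal R} {M N : ModuleCat.{u} R}
    (x : Abelian.Ext (ModuleCat.of R (R ⧸ I)) M 0) (f : M ⟶ N) :
    extZeroEval I N (x.comp (.mk₀ f) (add_zero 0)) = f (extZeroEval I M x) := by
  obtain ⟨g, rfl⟩ := (Abelian.Ext.mk₀_bijective _ _).2 x
  rw [Abelian.Ext.mk₀_comp_mk₀, extZeroEval_mk₀, extZeroEval_mk₀, ConcreteCategory.comp_apply]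

lemma extZeroEval_mk₀_comp {I J : Ideal R} {M : ModuleCat.{u} R}
    {g : ModuleCat.of R (R ⧸ I) ⟶ ModuleCat.of R (R ⧸ J)} (hg : g (1 : R ⧸ I) = (1 : R ⧸ J))
    (x : Abelian.Ext (ModuleCat.of R (R ⧸ J)) M 0) :
    extZeroEval I M ((Abelian.Ext.mk₀ g).comp x (zero_add 0)) = extZeroEval J M x := by
  obtain ⟨f, rfl⟩ := (Abelian.Ext.mk₀_bijective _ _).2 x
  rw [Abelian.Ext.mk₀_comp_mk₀, extZeroEval_mk₀, extZeroEval_mk₀, ConcreteCategory.comp_apply, hg]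

end DegreeZero

section LocalCohomology

instance hasExactColimitsOfShape_moduleCat (R : Type u) [Ring R] (J : Type) [SmallCategory J]
    [IsFiltered J] :
    HasExactColimitsOfShape J (ModuleCat.{u} R) :=
  have := AB5OfSize_of_univLE.{0, 0, u, u} (ModuleCat.{u} R)
  AB5OfSize.ofShape J

instance preservesColimit_forget_moduleCat {R : Type u} [Ring R] {J : Type} [SmallCategory J]
    [IsFiltered J] (F : J ⥤ ModuleCat.{u} R) : PreservesColimit F (forget (ModuleCat.{u} R)) :=
  have := preservesFilteredColimitsOfSize_shrink.{0, u, 0, u} (forget (ModuleCat.{u} R))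
  have := PreservesFilteredColimitsOfSize.preserves_filtered_colimits
    (F := forget (ModuleCat.{u} R)) J
  inferInstance

variable {R : Type u} [CommRing R] (I : Ideal R)

/-- The quotients of `R` by the powers of `I`. -/
noncomputable abbrev powQuotients : ℕᵒᵖᵒᵖ ⥤ (ModuleCat.{u} R)ᵒᵖ :=
  (localCohomology.ringModIdeals (localCohomology.idealPowersDiagram I)).op

/-- Local cohomology, in terms of the `Ext` of the derived category. -/
noncomputable def localCohomologyObjIso (n : ℕ) (M : ModuleCat.{u} R) :
    (localCohomology I n).obj M ≅ colimitExt R (powQuotients I) M n :=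
  colimitObjIsoColimitCompEvaluation _ M ≪≫
    HasColimit.isoOfNatIso (Functor.isoWhiskerLeft (powQuotients I) (extFlipObjIsoLinearExt R M n))

/-- The maps `extZeroEval (I ^ n) M`, as a cocone. -/
noncomputable def extZeroEvalCocone (M : ModuleCat.{u} R) :
    Cocone (powQuotients I ⋙ linearExt R M 0) where
  pt := M
  ι :=
    { app j := ModuleCat.ofHom (extZeroEval (I ^ j.unop.unop) M)
      naturality _ _ _ := by
        ext x
        exact extZeroEval_mk₀_comp rfl x }

/-- The map `H^0_I(M) ⟶ M`, whose image is the `I`-primary component. -/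
noncomputable def colimitExtZeroEval (M : ModuleCat.{u} R) :
    colimitExt R (powQuotients I) M 0 ⟶ M :=
  colimit.desc _ (extZeroEvalCocone I M)

lemma colimitExtZeroEval_ι {M : ModuleCat.{u} R} (j : ℕᵒᵖᵒᵖ)
    (x : (powQuotients I ⋙ linearExt R M 0).obj j) :
    colimitExtZeroEval I M (colimit.ι (powQuotients I ⋙ linearExt R M 0) j x) =
      extZeroEval (I ^ j.unop.unop) M x :=
  congr($(colimit.ι_desc (extZeroEvalCocone I M) j) x)

lemma colimitExtZeroEval_injective (M : ModuleCat.{u} R) :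
    Function.Injective (colimitExtZeroEval I M) := by
  refine (injective_iff_map_eq_zero (colimitExtZeroEval I M).hom).2 fun x hx ↦ ?_
  obtain ⟨j, x, rfl⟩ := Concrete.colimit_exists_rep (powQuotients I ⋙ linearExt R M 0) x
  obtain rfl : x = 0 := extZeroEval_injective _ _
    (((colimitExtZeroEval_ι I j x).symm.trans hx).trans (map_zero _).symm)
  exact map_zero _

instance mono_colimitExtZeroEval (M : ModuleCat.{u} R) : Mono (colimitExtZeroEval I M) :=
  (ModuleCat.mono_iff_injective _).2 (colimitExtZeroEval_injective I M)

lemma range_colimitExtZeroEval (M : ModuleCat.{u} R) :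
    LinearMap.range (colimitExtZeroEval I M).hom = I.primaryComponent M := by
  ext y
  rw [Ideal.primaryComponent_mem]
  simp only [← range_extZeroEval]
  constructor
  · rintro ⟨x, rfl⟩
    obtain ⟨j, x, rfl⟩ := Concrete.colimit_exists_rep (powQuotients I ⋙ linearExt R M 0) x
    exact ⟨j.unop.unop, x, (colimitExtZeroEval_ι I j x).symm⟩
  · rintro ⟨n, x, rfl⟩
    exact ⟨_, colimitExtZeroEval_ι I (op (op n)) x⟩

lemma colimitExtMap_colimitExtZeroEval {M N : ModuleCat.{u} R} (f : M ⟶ N) :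
    colimitExtMap R (powQuotients I) (.mk₀ f) (add_zero 0) ≫ colimitExtZeroEval I N =
      colimitExtZeroEval I M ≫ f := by
  refine colimit.hom_ext fun j ↦ ?_
  ext x
  have ι_colimitExtMap := congr($(ι_colimMap (Functor.whiskerLeft (powQuotients I)
    (linearExtMap R (.mk₀ f) (add_zero 0))) j) x)
  refine (congrArg (colimitExtZeroEval I N) ι_colimitExtMap).trans ?_
  refine (colimitExtZeroEval_ι I j _).trans ?_
  exact (extZeroEval_comp_mk₀ x f).trans (congrArg f (colimitExtZeroEval_ι I j x).symm)

/-- `H^0_I(M)` is the `I`-primary component of `M`. -/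
noncomputable def localCohomologyZeroObjIso (M : ModuleCat.{u} R) :
    (localCohomology I 0).obj M ≅ ModuleCat.of R (I.primaryComponent M) :=
  localCohomologyObjIso I 0 M ≪≫
    (LinearEquiv.ofInjective _ (colimitExtZeroEval_injective I M) ≪≫ₗ
      LinearEquiv.ofEq _ _ (range_colimitExtZeroEval I M)).toModuleIso

lemma isZero_colimitExt_zero {M : ModuleCat.{u} R} (h : I.primaryComponent M = ⊥) :
    IsZero (colimitExt R (powQuotients I) M 0) := by
  refine IsZero.of_mono_eq_zero (colimitExtZeroEval I M) (ModuleCat.hom_ext ?_)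
  exact LinearMap.range_eq_bot.1 ((range_colimitExtZeroEval I M).trans h)

lemma epi_colimitExtMap_zero {T N : ModuleCat.{u} R} (hT : I.primaryComponent T = ⊤) (f : T ⟶ N)
    [Epi f] : Epi (colimitExtMap R (powQuotients I) (.mk₀ f) (add_zero 0)) := by
  have : Epi (colimitExtZeroEval I T) :=
    (ModuleCat.epi_iff_range_eq_top _).2 ((range_colimitExtZeroEval I T).trans hT)
  have epi_comp := epi_comp (colimitExtZeroEval I T) f
  rw [← colimitExtMap_colimitExtZeroEval] at epi_comp
  have := epi_of_epi (colimitExtMap R (powQuotients I) (.mk₀ f) (add_zero 0))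
    (colimitExtZeroEval I N)
  have := isIso_of_mono_of_epi (colimitExtZeroEval I N)
  exact (epi_comp_iff_of_isIso _ (colimitExtZeroEval I N)).1 epi_comp

end LocalCohomology

section Cosyzygy

variable {R : Type u} [CommRing R] (I : Ideal R)

variable {I} in
/-- Dimension shifting along an embedding into an injective module without `I`-torsion. -/
noncomputable def localCohomologyX₃IsoSuccX₁ {K : ShortComplex (ModuleCat.{u} R)}
    (hK : K.ShortExact) [Injective K.X₂] (h : I.primaryComponent K.X₂ = ⊥) (n : ℕ) :
    (localCohomology I n).obj K.X₃ ≅ (localCohomology I (n + 1)).obj K.X₁ :=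
  have isZero (i : ℕ) : IsZero (colimitExt R (powQuotients I) K.X₂ i) := by
    cases i with
    | zero => exact isZero_colimitExt_zero I h
    | succ i => exact isZero_colimitExt_of_injective R _ K.X₂ i
  have := isIso_colimitExtMap_extClass (R := R) (powQuotients I) hK rfl (isZero n)
    (isZero (n + 1))
  localCohomologyObjIso I n K.X₃ ≪≫
    asIso (colimitExtMap R (powQuotients I) hK.extClass (rfl : n + 1 = n + 1)) ≪≫
    (localCohomologyObjIso I (n + 1) K.X₁).symm

variable [IsNoetherianRing R]

lemma exists_mono_primaryComponent_eq_top {T : ModuleCat.{u} R} (hT : I.primaryComponent T = ⊤) :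
    ∃ (E : ModuleCat.{u} R) (f : T ⟶ E), Injective E ∧ Mono f ∧ I.primaryComponent E = ⊤ := by
  let E : ModuleCat.{u} R := Injective.under T
  let ι : T →ₗ[R] E := (Injective.ι T).hom
  have hι : Function.Injective ι := (ModuleCat.mono_iff_injective (Injective.ι T)).1 inferInstance
  have mem (x : T) : ι x ∈ I.primaryComponent E :=
    (comap_primaryComponent_of_injective hι).ge (hT ▸ Submodule.mem_top)
  exact ⟨_, ModuleCat.ofHom (ι.codRestrict _ mem), injective_primaryComponent I _,
    (ModuleCat.mono_iff_injective _).2 ((LinearMap.injective_codRestrict_iff mem).2 hι),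
    primaryComponent_primaryComponent I _⟩

lemma exists_mono_primaryComponent_eq_bot {L : ModuleCat.{u} R} (hL : I.primaryComponent L = ⊥) :
    ∃ (E : ModuleCat.{u} R) (f : L ⟶ E), Injective E ∧ Mono f ∧ I.primaryComponent E = ⊥ := by
  let E : ModuleCat.{u} R := Injective.under L
  let ι : L →ₗ[R] E := (Injective.ι L).hom
  have hι : Function.Injective ι := (ModuleCat.mono_iff_injective (Injective.ι L)).1 inferInstance
  have ker_eq_bot : LinearMap.ker ((I.primaryComponent E).mkQ ∘ₗ ι) = ⊥ := by
    rw [LinearMap.ker_comp, Submodule.ker_mkQ, comap_primaryComponent_of_injective hι, hL]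
  exact ⟨_, ModuleCat.ofHom ((I.primaryComponent E).mkQ ∘ₗ ι),
    injective_quotient_primaryComponent I _,
    (ModuleCat.mono_iff_injective _).2 (LinearMap.ker_eq_bot.1 ker_eq_bot),
    primaryComponent_quotient_primaryComponent I _⟩

lemma isZero_colimitExt_of_primaryComponent_eq_top {T : ModuleCat.{u} R}
    (hT : I.primaryComponent T = ⊤) (n : ℕ) :
    IsZero (colimitExt R (powQuotients I) T (n + 1)) := by
  induction n using Nat.strong_induction_on generalizing T with | h n ih
  obtain ⟨E, f, _, _, hE⟩ := exists_mono_primaryComponent_eq_top I hT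
  have shortExact : (ShortComplex.mk f (cokernel.π f) (cokernel.condition f)).ShortExact :=
    { exact := ShortComplex.exact_cokernel f }
  have cokernel_eq_top : I.primaryComponent (cokernel f : ModuleCat.{u} R) = ⊤ :=
    primaryComponent_eq_top_of_surjective
      ((ModuleCat.epi_iff_surjective (cokernel.π f)).1 inferInstance) hE
  have : Epi (colimitExtMap R (powQuotients I) (.mk₀ (cokernel.π f)) (add_zero n)) := by
    cases n with
    | zero => exact epi_colimitExtMap_zero I hE (cokernel.π f)
    | succ n => exact (ih n n.lt_succ_self cokernel_eq_top).epi _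
  exact isZero_colimitExt_X₁ _ shortExact rfl (isZero_colimitExt_of_injective R _ E n)

/-- Local cohomology in positive degrees does not see the primary component. -/
noncomputable def localCohomologySuccObjIsoQuotient (M : ModuleCat.{u} R) (n : ℕ) :
    (localCohomology I (n + 1)).obj M ≅
      (localCohomology I (n + 1)).obj (ModuleCat.of R (M ⧸ I.primaryComponent M)) :=
  have isZero := isZero_colimitExt_of_primaryComponent_eq_top I
    (T := ModuleCat.of R (I.primaryComponent M)) (primaryComponent_primaryComponent I M)
  have := isIso_colimitExtMap_g (R := R) (powQuotients I)
    (shortExact_subtype_mkQ (I.primaryComponent M)) (isZero n) (isZero (n + 1))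
  localCohomologyObjIso I (n + 1) M ≪≫ asIso (colimitExtMap R (powQuotients I)
    (.mk₀ (ModuleCat.ofHom (I.primaryComponent M).mkQ)) (add_zero (n + 1))) ≪≫
    (localCohomologyObjIso I (n + 1) (ModuleCat.of R (M ⧸ I.primaryComponent M))).symm

end Cosyzygy

section Serre

variable {R : Type u} [CommRing R] {S : SerreClass R}

namespace SerreClass

section

variable {L M N : Type u} [AddCommGroup L] [Module R L] [AddCommGroup M] [Module R M]
  [AddCommGroup N] [Module R N]

lemma mem_of_injective (f : L →ₗ[R] M) (hf : Function.Injective f) (hM : S.mem M) : S.mem L :=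
  ((S.mem_iff_of_ses f f.range.mkQ hf f.range.mkQ_surjective f.range.ker_mkQ.symm).1 hM).1

lemma mem_of_surjective (g : M →ₗ[R] N) (hg : Function.Surjective g) (hM : S.mem M) : S.mem N :=
  ((S.mem_iff_of_ses g.ker.subtype g g.ker.injective_subtype hg g.ker.range_subtype).1 hM).2

lemma mem_of_subsingleton [Subsingleton N] (hM : S.mem M) : S.mem N :=
  mem_of_surjective (0 : M →ₗ[R] N) (Function.surjective_to_subsingleton _) hM

lemma mem_of_exact {f : L →ₗ[R] M} {g : M →ₗ[R] N} (h : Function.Exact f g) (hL : S.mem L)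
    (hN : S.mem N) : S.mem M :=
  (S.mem_iff_of_ses f.range.subtype g.rangeRestrict f.range.injective_subtype
    g.surjective_rangeRestrict (by
      rw [Submodule.range_subtype, LinearMap.ker_rangeRestrict, h.linearMap_ker_eq])).2
    ⟨mem_of_surjective f.rangeRestrict f.surjective_rangeRestrict hL,
      mem_of_injective g.range.subtype g.range.injective_subtype hN⟩

lemma mem_iff_of_linearEquiv (e : M ≃ₗ[R] N) : S.mem M ↔ S.mem N :=
  ⟨mem_of_injective e.symm.toLinearMap e.symm.injective,
    mem_of_injective e.toLinearMap e.injective⟩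

end

section

variable {X : ModuleCat.{u} R} {K : ShortComplex (ModuleCat.{u} R)} {n : ℕ}

lemma mem_ext_X₂ (hK : K.ShortExact) (h₁ : S.mem (Abelian.Ext X K.X₁ n))
    (h₃ : S.mem (Abelian.Ext X K.X₃ n)) : S.mem (Abelian.Ext X K.X₂ n) := by
  refine mem_of_exact (f := (Abelian.Ext.mk₀ K.f).postcompOfLinear R X (add_zero n))
    (g := (Abelian.Ext.mk₀ K.g).postcompOfLinear R X (add_zero n))
    (fun x ↦ ⟨fun hx ↦ ?_, ?_⟩) h₁ h₃
  · exact Abelian.Ext.covariant_sequence_exact₂ _ hK x hx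
  · rintro ⟨y, rfl⟩
    refine (Abelian.Ext.comp_assoc_of_third_deg_zero _ _ _ (add_zero n)).trans ?_
    rw [Abelian.Ext.mk₀_comp_mk₀, K.zero, Abelian.Ext.mk₀_zero]
    exact Abelian.Ext.comp_zero ..

lemma mem_ext_X₁_of_injective (hK : K.ShortExact) [Injective K.X₂]
    (h : S.mem (Abelian.Ext X K.X₃ n)) : S.mem (Abelian.Ext X K.X₁ (n + 1)) :=
  mem_of_surjective (hK.extClass.postcompOfLinear R X rfl) (fun x ↦
    Abelian.Ext.covariant_sequence_exact₁ _ hK x (Abelian.Ext.eq_zero_of_injective _) rfl) h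

end

variable {𝔞 : Ideal R} {n : ℕ} {M N : ModuleCat.{u} R}

lemma mem_extIdeal_iff :
    S.mem (extIdeal 𝔞 n M) ↔ S.mem (Abelian.Ext (ModuleCat.of R (R ⧸ 𝔞)) M n) :=
  mem_iff_of_linearEquiv ((extFlipObjIsoLinearExt R M n).app (op _)).toLinearEquiv

lemma mem_extIdeal_congr (e : M ≅ N) : S.mem (extIdeal 𝔞 n M) ↔ S.mem (extIdeal 𝔞 n N) :=
  mem_iff_of_linearEquiv (((Ext R (ModuleCat.{u} R) n).obj _).mapIso e).toLinearEquiv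

lemma mem_extIdeal_of_localCohomology_zero {𝔟 : Ideal R}
    (h₁ : S.mem (extIdeal 𝔞 n ((localCohomology 𝔟 0).obj M)))
    (h₃ : S.mem (extIdeal 𝔞 n (ModuleCat.of R (M ⧸ 𝔟.primaryComponent M)))) :
    S.mem (extIdeal 𝔞 n M) :=
  mem_extIdeal_iff.2 (mem_ext_X₂ (shortExact_subtype_mkQ (𝔟.primaryComponent M))
    (mem_extIdeal_iff.1 ((mem_extIdeal_congr (localCohomologyZeroObjIso 𝔟 M)).1 h₁))
    (mem_extIdeal_iff.1 h₃))

end SerreClass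

lemma subsingleton_ext_zero_of_primaryComponent_eq_bot {𝔞 𝔟 : Ideal R} (h𝔟𝔞 : 𝔟 ≤ 𝔞)
    {L : ModuleCat.{u} R} (hL : 𝔟.primaryComponent L = ⊥) :
    Subsingleton (Abelian.Ext (ModuleCat.of R (R ⧸ 𝔞)) L 0) := by
  have torsionBySet_le : Submodule.torsionBySet R L 𝔞 ≤ 𝔟.primaryComponent L := fun x hx ↦
    mem_primaryComponent_iff.2 ⟨1, fun a ha ↦
      (Submodule.mem_torsionBySet_iff _ _).1 hx ⟨a, h𝔟𝔞 (pow_one 𝔟 ▸ ha)⟩⟩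
  have extZeroEval_eq_zero : extZeroEval 𝔞 L = 0 :=
    LinearMap.range_eq_bot.1 (eq_bot_iff.2 ((range_extZeroEval 𝔞 L).le.trans
      (torsionBySet_le.trans hL.le)))
  exact ⟨fun x y ↦ extZeroEval_injective 𝔞 L (by simp only [extZeroEval_eq_zero,
    LinearMap.zero_apply])⟩

end Serre

/-- Yang–Shen, Lemma 1.8 (module case): if `Ext^j_R(R/𝔞, H^i_𝔟(M)) ∈ S` for all `i + j ≤ s`,
then `Ext^n_R(R/𝔞, M) ∈ S` for all `n ≤ s`. -/
theorem serreClass_mem_ext_of_ext_localCohomology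
    {R : Type u} [CommRing R] [IsNoetherianRing R] (S : SerreClass R)
    (𝔞 𝔟 : Ideal R) (h𝔟𝔞 : 𝔟 ≤ 𝔞) (M : ModuleCat.{u} R) (s : ℕ)
    (h : ∀ i j : ℕ, i + j ≤ s → S.mem (extIdeal 𝔞 j ((localCohomology 𝔟 i).obj M))) :
    ∀ n : ℕ, n ≤ s → S.mem (extIdeal 𝔞 n M) := by
  intro n hn
  induction n generalizing M s with
  | zero =>
    have := subsingleton_ext_zero_of_primaryComponent_eq_bot h𝔟𝔞
      (L := ModuleCat.of R (M ⧸ 𝔟.primaryComponent M))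
      (primaryComponent_quotient_primaryComponent ..)
    exact SerreClass.mem_extIdeal_of_localCohomology_zero (h 0 0 hn)
      (SerreClass.mem_extIdeal_iff.2 (SerreClass.mem_of_subsingleton (h 0 0 hn)))
  | succ n ih =>
    refine SerreClass.mem_extIdeal_of_localCohomology_zero (h 0 (n + 1) (by lia)) ?_
    obtain ⟨E, f, _, _, hE⟩ := exists_mono_primaryComponent_eq_bot 𝔟
      (L := ModuleCat.of R (M ⧸ 𝔟.primaryComponent M))
      (primaryComponent_quotient_primaryComponent ..)
    have shortExact : (ShortComplex.mk f (cokernel.π f) (cokernel.condition f)).ShortExact :=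
      { exact := ShortComplex.exact_cokernel f }
    let iso (i : ℕ) :
        (localCohomology 𝔟 i).obj (cokernel f) ≅ (localCohomology 𝔟 (i + 1)).obj M :=
      localCohomologyX₃IsoSuccX₁ shortExact hE i ≪≫ (localCohomologySuccObjIsoQuotient 𝔟 M i).symm
    have mem_cokernel : S.mem (extIdeal 𝔞 n (cokernel f)) := ih (cokernel f) n
      (fun i j hij ↦ (SerreClass.mem_extIdeal_congr (iso i)).2 (h (i + 1) j (by lia))) le_rfl
    exact SerreClass.mem_extIdeal_iff.2 (SerreClass.mem_ext_X₁_of_injective shortExact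
      (SerreClass.mem_extIdeal_iff.1 mem_cokernel))
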